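/- Let k ∈ ℕ, r ∈ (1,2], and let (X^i)_{i∈ℕ} be i.i.d. centered random vectors in ℝ^k with common probability density function f : ℝ^k → ℝ (with respect to Lebesgue measure). Assume: (1) f ∈ L^r(ℝ^k); (2) every coordinate of X^1 is square-integrable, so the covariance matrix C of X^1 is well-defined with finite entries; (3) C is positive definite. Then sup_{v∈ℝ^k} |n^{k/2}·f^{(n)}(√n·v) − (2π)^{−k/2}·(det C)^{−1/2}·e^{−⟨v, C^{−1}v⟩/2}| → 0 as n → ∞, where f^{(n)} denotes the n-fold convolution of f (the density of Σ_{i=1}^n X^i). -/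

import Mathlib

open MeasureTheory Filter Topology Matrix
open scoped Classical

noncomputable section

/-- Convolution of two functions on `ℝ^k`. -/
def convK (k : ℕ) (g h : (Fin k → ℝ) → ℝ) : (Fin k → ℝ) → ℝ :=
  fun x => ∫ y, g (x - y) * h y

/-- The `n`-fold convolution `f^{(n)} = f * ⋯ * f` on `ℝ^k`. -/
def convPow (k : ℕ) (f : (Fin k → ℝ) → ℝ) : ℕ → (Fin k → ℝ) → ℝ
  | 0 => fun _ => 0
  | 1 => f
  | n + 2 => convK k (convPow k f (n + 1)) f

/-!
With `φ = 𝓕 f`, the density `f^{(n)}` is the inverse Fourier transform of `φ ^ n`, and the Gaussian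
density is that of `exp (-q)` for a quadratic form `q`. So the uniform distance in question is at
most `∫ ‖φ (t / √n) ^ n - exp (-q t)‖ dt`. For `t / √n` close to `0`, the second-order expansion
of `φ` gives both pointwise convergence and a Gaussian bound, hence dominated convergence. Away from
`0`, continuity, the Riemann–Lebesgue lemma and the strict inequality `‖φ t‖ < 1` for `t ≠ 0` give
a uniform bound `‖φ‖ ≤ η < 1`, so once some power `φ ^ N` is integrable this part is at most a
constant times `n ^ (k / 2) * η ^ n`.

Some power of `φ` is integrable because `f ∈ L^r` with `r > 1`: truncate `f` at height `L`, apply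
Plancherel to the bounded part and bound the rest in `L¹`, then choose `L` in terms of `s` to get
the weak-type bound `|{t | s ≤ ‖φ t‖}| ≤ K * s ^ (-(2 + 1 / (r - 1)))`. The power then only has to
exceed `2 + 1 / (r - 1)`.
-/

open scoped FourierTransform SchwartzMap Convolution

section FourierTransform

variable {V : Type*} [NormedAddCommGroup V] [InnerProductSpace ℝ V] [FiniteDimensional ℝ V]
  [MeasurableSpace V] [BorelSpace V] {f g : V → ℂ}

lemma continuous_fourier (hf : Integrable f) : Continuous (𝓕 f) :=
  VectorFourier.fourierIntegral_continuous Real.continuous_fourierChar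
    (L := innerₗ V) continuous_inner hf

lemma continuous_fourierInv (hf : Integrable f) : Continuous (𝓕⁻ f) := by
  rw [Real.fourierInv_eq_fourier_comp_neg]
  exact continuous_fourier hf.comp_neg

lemma norm_fourier_le (f : V → ℂ) (t : V) : ‖𝓕 f t‖ ≤ ∫ x, ‖f x‖ :=
  VectorFourier.norm_fourierIntegral_le_integral_norm _ _ _ _ _

lemma fourier_add_apply (hf : Integrable f) (hg : Integrable g) (t : V) :
    𝓕 (f + g) t = 𝓕 f t + 𝓕 g t :=
  congrFun (VectorFourier.fourierIntegral_add Real.continuous_fourierChar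
    (L := innerₗ V) continuous_inner hf hg) t

lemma integral_fourier_mul_eq (hf : Integrable f) (hg : Integrable g) :
    ∫ x, 𝓕 f x * g x = ∫ x, f x * 𝓕 g x := by
  have h := VectorFourier.integral_fourierIntegral_smul_eq_flip (L := innerₗ V)
    Real.continuous_fourierChar continuous_inner hf hg (μ := volume) (ν := volume)
  rwa [flip_innerₗ] at h

lemma integral_fourierInv_mul_eq (hf : Integrable f) (hg : Integrable g) :
    ∫ x, 𝓕⁻ f x * g x = ∫ x, f x * 𝓕⁻ g x := by
  rw [Real.fourierInv_eq_fourier_comp_neg, integral_fourier_mul_eq hf.comp_neg hg,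
    ← integral_neg_eq_self]
  simp only [neg_neg, Real.fourierInv_eq_fourier_neg]

lemma norm_fourierInv_sub_le (hf : Integrable f) (hg : Integrable g) (v : V) :
    ‖𝓕⁻ f v - 𝓕⁻ g v‖ ≤ ∫ t, ‖f t - g t‖ := by
  have h_sub := fourier_add_apply (hf.sub hg) hg (-v)
  rw [sub_add_cancel] at h_sub
  rw [Real.fourierInv_eq_fourier_neg, Real.fourierInv_eq_fourier_neg, sub_eq_iff_eq_add.2 h_sub]
  exact norm_fourier_le (f - g) (-v)

lemma tendstoUniformly_fourierInv_of_tendsto_integral_norm_sub {ι : Type*} {l : Filter ι}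
    {F : ι → V → ℂ} (hF : ∀ᶠ i in l, Integrable (F i)) (hg : Integrable g)
    (h : Tendsto (fun i => ∫ t, ‖F i t - g t‖) l (𝓝 0)) :
    TendstoUniformly (fun i => 𝓕⁻ (F i)) (𝓕⁻ g) l := by
  rw [Metric.tendstoUniformly_iff]
  intro ε hε
  filter_upwards [hF, h.eventually_lt_const hε] with i hFi hi v
  rw [dist_comm, dist_eq_norm]
  exact (norm_fourierInv_sub_le hFi hg v).trans_lt hi

lemma ae_eq_of_forall_integral_schwartz_mul_eq (hf : LocallyIntegrable f)
    (hg : LocallyIntegrable g) (h : ∀ G : 𝓢(V, ℂ), ∫ x, f x * G x = ∫ x, g x * G x) :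
    f =ᵐ[volume] g := by
  refine ae_eq_of_integral_contDiff_smul_eq hf hg fun u hu hus => ?_
  have hus' : HasCompactSupport fun x => (u x : ℂ) :=
    hus.comp_left (g := fun x : ℝ => (x : ℂ)) Complex.ofReal_zero
  simp only [Complex.real_smul, mul_comm]
  exact h (hus'.toSchwartzMap (Complex.ofRealCLM.contDiff.comp hu))

lemma fourierInv_fourier_ae_eq (hf : Integrable f) (hF : Integrable (𝓕 f)) :
    𝓕⁻ (𝓕 f) =ᵐ[volume] f := by
  refine ae_eq_of_forall_integral_schwartz_mul_eq (continuous_fourierInv hF).locallyIntegrable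
    hf.locallyIntegrable fun G => ?_
  rw [integral_fourierInv_mul_eq hF G.integrable, ← SchwartzMap.fourierInv_coe,
    integral_fourier_mul_eq hf (𝓕⁻ G).integrable, ← SchwartzMap.fourier_coe,
    FourierTransform.fourier_fourierInv_eq]

lemma fourier_ae_eq_fourier_toLp (hf : Integrable f) (hf2 : MemLp f 2) :
    𝓕 f =ᵐ[volume] (𝓕 (hf2.toLp f) : Lp (α := V) ℂ 2) := by
  refine ae_eq_of_forall_integral_schwartz_mul_eq (continuous_fourier hf).locallyIntegrable
    ((Lp.memLp _).locallyIntegrable one_le_two) fun G => ?_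
  have hG := congrArg (· G) (Lp.fourier_toTemperedDistribution_eq (hf2.toLp f))
  simp only [TemperedDistribution.fourier_apply, Lp.toTemperedDistribution_apply,
    smul_eq_mul, mul_comm] at hG
  rw [integral_fourier_mul_eq hf G.integrable, ← hG]
  refine integral_congr_ae ?_
  filter_upwards [hf2.coeFn_toLp] with x hx
  rw [hx, SchwartzMap.fourier_coe]

lemma eLpNorm_fourier_eq (hf : Integrable f) (hf2 : MemLp f 2) :
    eLpNorm (𝓕 f) 2 volume = eLpNorm f 2 volume := by
  rw [eLpNorm_congr_ae (fourier_ae_eq_fourier_toLp hf hf2), ← eLpNorm_congr_ae hf2.coeFn_toLp,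
    ← Lp.enorm_def, ← Lp.enorm_def, ← ofReal_norm, ← ofReal_norm, Lp.norm_fourier_eq]

lemma convolution_eq_fourierInv (hf : Integrable f) (hg : Integrable g)
    (hF : Integrable (𝓕 f)) :
    g ⋆[ContinuousLinearMap.mul ℂ ℂ] f = 𝓕⁻ (𝓕 g * 𝓕 f) := by
  ext x
  set e : V → ℂ := fun t => Real.fourierChar (inner ℝ t x) • 𝓕 f t with he
  have he_int : Integrable e := by
    simpa [he] using (Real.fourierIntegral_convergent_iff (-x)).2 hF
  have hf_eq : ∀ᵐ y, f (x - y) = 𝓕 e y := by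
    filter_upwards [(quasiMeasurePreserving_sub_left volume x).ae (fourierInv_fourier_ae_eq hf hF)]
      with y hy
    rw [← hy, Real.fourierInv_eq, Real.fourier_eq]
    congr with t
    rw [he, smul_smul, ← AddChar.map_add_eq_mul, inner_sub_right, neg_add_eq_sub]
  calc (g ⋆[ContinuousLinearMap.mul ℂ ℂ] f) x = ∫ y, g y * 𝓕 e y :=
        integral_congr_ae (hf_eq.mono fun y hy => congrArg (g y * ·) hy)
    _ = ∫ t, 𝓕 g t * e t := (integral_fourier_mul_eq hg he_int).symm
    _ = 𝓕⁻ (𝓕 g * 𝓕 f) x := by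
        rw [Real.fourierInv_eq]
        simp only [he, Pi.mul_apply, mul_smul_comm]

end FourierTransform

section ChangeOfVariables

variable {V : Type*} [NormedAddCommGroup V] [InnerProductSpace ℝ V] [FiniteDimensional ℝ V]
  [MeasurableSpace V] [BorelSpace V]

lemma integral_comp_linearMap {L : V →ₗ[ℝ] V} (hL : LinearMap.det L ≠ 0) (g : V → ℂ) :
    ∫ t, g (L t) = |LinearMap.det L|⁻¹ • ∫ t, g t := by
  have h_emb : MeasurableEmbedding L :=
    (L.equivOfDetNeZero hL).toContinuousLinearEquiv.toHomeomorph.measurableEmbedding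
  rw [← h_emb.integral_map, Measure.map_linearMap_addHaar_eq_smul_addHaar volume hL,
    integral_smul_measure, ENNReal.toReal_ofReal (abs_nonneg _), abs_inv]

lemma fourierInv_comp_linearMap {L : V →ₗ[ℝ] V} (hL : LinearMap.det L ≠ 0) (g : V → ℂ) (w : V) :
    𝓕⁻ (fun t => g (L t)) (L.adjoint w) = |LinearMap.det L|⁻¹ • 𝓕⁻ g w := by
  simp only [Real.fourierInv_eq, LinearMap.adjoint_inner_right]
  exact integral_comp_linearMap hL fun t => Real.fourierChar (inner ℝ t w) • g t

lemma fourierInv_comp_inv_smul {a : ℝ} (ha : 0 < a) (g : V → ℂ) (w : V) :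
    𝓕⁻ (fun t => g (a⁻¹ • t)) w = a ^ Module.finrank ℝ V • 𝓕⁻ g (a • w) := by
  rw [Real.fourierInv_eq, Real.fourierInv_eq,
    ← Measure.integral_comp_inv_smul_of_nonneg volume _ ha.le]
  simp only [inner_smul_left, inner_smul_right, RCLike.conj_to_real, mul_inv_cancel_left₀ ha.ne']

lemma fourierInv_gaussian (w : V) :
    𝓕⁻ (fun t : V => Complex.exp (-(2 * Real.pi ^ 2) * ‖t‖ ^ 2)) w =
      ((2 * Real.pi) ^ (-(Module.finrank ℝ V : ℝ) / 2) * Real.exp (-‖w‖ ^ 2 / 2) : ℝ) := by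
  have h_re : (0 : ℝ) < (2 * (Real.pi : ℂ) ^ 2).re := by
    norm_cast
    positivity
  have h_base : Real.pi / (2 * (Real.pi : ℂ) ^ 2) = ((2 * Real.pi)⁻¹ : ℝ) := by
    push_cast
    field_simp
  have h_exp : -(Real.pi : ℂ) ^ 2 * ‖w‖ ^ 2 / (2 * Real.pi ^ 2) = (-‖w‖ ^ 2 / 2 : ℝ) := by
    push_cast
    field_simp
  rw [Real.fourierInv_eq_fourier_neg, fourier_gaussian_innerProductSpace h_re, norm_neg, h_base,
    h_exp, neg_div _ (Module.finrank ℝ V : ℝ), Real.rpow_neg (by positivity),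
    ← Real.inv_rpow (by positivity), Complex.ofReal_mul,
    Complex.ofReal_cpow (by positivity), Complex.ofReal_exp]
  push_cast
  rfl

lemma fourierInv_gaussian_comp_linearMap {L : V →ₗ[ℝ] V} (hL : LinearMap.det L ≠ 0) (w : V) :
    𝓕⁻ (fun t => Complex.exp (-(2 * Real.pi ^ 2) * ‖L t‖ ^ 2)) (L.adjoint w) =
      ((2 * Real.pi) ^ (-(Module.finrank ℝ V : ℝ) / 2) * |LinearMap.det L|⁻¹ *
        Real.exp (-‖w‖ ^ 2 / 2) : ℝ) := by
  rw [fourierInv_comp_linearMap hL fun t : V => Complex.exp (-(2 * Real.pi ^ 2) * ‖t‖ ^ 2),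
    fourierInv_gaussian, Complex.real_smul, ← Complex.ofReal_mul, mul_left_comm, mul_assoc]

end ChangeOfVariables

section WeakType

variable {α E : Type*} [MeasurableSpace α] {μ : Measure α} [NormedAddCommGroup E]

lemma integrable_norm_rpow_of_measure_norm_ge_le {φ : α → E} (hφ : AEStronglyMeasurable φ μ)
    {B K p q : ℝ} (hB : ∀ x, ‖φ x‖ ≤ B) (hB_nonneg : 0 ≤ B) (hq : 0 < q) (hpq : p < q)
    (h_weak : ∀ s > 0, μ {x | s ≤ ‖φ x‖} ≤ ENNReal.ofReal (K * s ^ (-p))) :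
    Integrable (fun x => ‖φ x‖ ^ q) μ := by
  have h_nonneg : ∀ x, 0 ≤ ‖φ x‖ := fun x => norm_nonneg _
  refine ⟨(hφ.norm.aemeasurable.pow_const q).aestronglyMeasurable, ?_⟩
  rw [hasFiniteIntegral_iff_ofReal (ae_of_all _ fun x => Real.rpow_nonneg (h_nonneg x) q),
    lintegral_rpow_eq_lintegral_meas_le_mul μ (ae_of_all _ h_nonneg) hφ.norm.aemeasurable hq]
  refine ENNReal.mul_lt_top ENNReal.ofReal_lt_top ?_
  have h_int : IntegrableOn (fun s : ℝ => K * s ^ (q - 1 - p)) (Set.Ioc 0 B) := by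
    refine Integrable.const_mul ?_ K
    rw [← IntegrableOn, ← intervalIntegrable_iff_integrableOn_Ioc_of_le hB_nonneg]
    exact intervalIntegral.intervalIntegrable_rpow' (by linarith)
  have h_le : ∀ s ∈ Set.Ioi (0 : ℝ), μ {x | s ≤ ‖φ x‖} * ENNReal.ofReal (s ^ (q - 1)) ≤
      (Set.Iic B).indicator (fun s => ENNReal.ofReal (K * s ^ (q - 1 - p))) s := by
    intro s hs
    by_cases hsB : s ≤ B
    · rw [Set.indicator_of_mem (Set.mem_Iic.2 hsB), sub_eq_neg_add _ p, Real.rpow_add hs,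
        ← mul_assoc, ENNReal.ofReal_mul' (Real.rpow_nonneg (le_of_lt hs) _)]
      gcongr
      exact h_weak s hs
    · have h_empty : {x | s ≤ ‖φ x‖} = ∅ :=
        Set.eq_empty_of_forall_notMem fun x hx => hsB (le_trans hx (hB x))
      rw [h_empty, measure_empty, zero_mul]
      exact zero_le
  calc _ ≤ _ := setLIntegral_mono' measurableSet_Ioi h_le
    _ = ∫⁻ s in Set.Ioc 0 B, ENNReal.ofReal (K * s ^ (q - 1 - p)) := by
        rw [setLIntegral_indicator measurableSet_Iic, Set.inter_comm, Set.Ioi_inter_Iic]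
    _ < ⊤ := h_int.lintegral_lt_top

end WeakType

section FourierPower

variable {V : Type*} [NormedAddCommGroup V] [InnerProductSpace ℝ V] [FiniteDimensional ℝ V]
  [MeasurableSpace V] [BorelSpace V] {f : V → ℂ} {r L : ℝ}

lemma lintegral_enorm_sq_fourier_eq (hf : Integrable f) (hf2 : MemLp f 2) :
    ∫⁻ t, ‖𝓕 f t‖ₑ ^ (2 : ℝ) = ∫⁻ x, ‖f x‖ₑ ^ (2 : ℝ) := by
  have h (g : V → ℂ) := eLpNorm_nnreal_pow_eq_lintegral (f := g) (μ := volume) two_ne_zero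
  exact (h (𝓕 f)).symm.trans ((congrArg (· ^ (2 : ℝ)) (eLpNorm_fourier_eq hf hf2)).trans (h f))

lemma nullMeasurableSet_norm_le (hf : Integrable f) (L : ℝ) :
    NullMeasurableSet {x | ‖f x‖ ≤ L} :=
  nullMeasurableSet_le hf.norm.aemeasurable aemeasurable_const

lemma lintegral_enorm_sq_fourier_truncation_le (hf : Integrable f) (hL : 0 ≤ L) :
    ∫⁻ t, ‖𝓕 ({x | ‖f x‖ ≤ L}.indicator f) t‖ₑ ^ (2 : ℝ) ≤
      ENNReal.ofReal (L * ∫ x, ‖f x‖) := by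
  set g := {x | ‖f x‖ ≤ L}.indicator f with hg_def
  have hg : Integrable g := hf.indicator₀ (nullMeasurableSet_norm_le hf L)
  have hg_sq : ∀ x, ‖g x‖ ^ 2 ≤ L * ‖f x‖ := fun x => by
    by_cases hx : x ∈ {x | ‖f x‖ ≤ L}
    · rw [hg_def, Set.indicator_of_mem hx, sq]
      gcongr
      exact hx
    · rw [hg_def, Set.indicator_of_notMem hx, norm_zero, zero_pow two_ne_zero]
      positivity
  have hg2 : MemLp g 2 := by
    rw [memLp_two_iff_integrable_sq_norm hg.1]
    exact (hf.norm.const_mul L).mono' (hg.1.norm.pow 2) <| ae_of_all _ fun x => by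
      rw [Real.norm_of_nonneg (sq_nonneg _)]
      exact hg_sq x
  rw [lintegral_enorm_sq_fourier_eq hg hg2, ← integral_const_mul,
    ofReal_integral_eq_lintegral_ofReal (hf.norm.const_mul L) (ae_of_all _ fun x => by positivity)]
  refine lintegral_mono fun x => ?_
  rw [ENNReal.rpow_two, ← ofReal_norm, ← ENNReal.ofReal_pow (norm_nonneg _)]
  exact ENNReal.ofReal_le_ofReal (hg_sq x)

lemma norm_fourier_tail_le (hr : 1 ≤ r) (hf : Integrable f)
    (hfr : Integrable fun x => ‖f x‖ ^ r) (hL : 0 < L) (t : V) :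
    ‖𝓕 ({x | ‖f x‖ ≤ L}ᶜ.indicator f) t‖ ≤ L ^ (1 - r) * ∫ x, ‖f x‖ ^ r := by
  have h_tail := hf.indicator₀ (nullMeasurableSet_norm_le hf L).compl
  refine (norm_fourier_le _ t).trans ?_
  rw [← integral_const_mul]
  refine integral_mono h_tail.norm (hfr.const_mul _) fun x => ?_
  by_cases hx : ‖f x‖ ≤ L
  · have hx' : x ∉ {x | ‖f x‖ ≤ L}ᶜ := Set.notMem_compl_iff.2 hx
    simp only [Set.indicator_of_notMem hx', norm_zero]
    positivity
  · have hx' : x ∈ {x | ‖f x‖ ≤ L}ᶜ := hx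
    rw [not_le] at hx
    calc ‖{x | ‖f x‖ ≤ L}ᶜ.indicator f x‖ = ‖f x‖ := by rw [Set.indicator_of_mem hx']
      _ = ‖f x‖ ^ (1 - r) * ‖f x‖ ^ r := by
          rw [← Real.rpow_add (hL.trans hx), sub_add_cancel, Real.rpow_one]
      _ ≤ L ^ (1 - r) * ‖f x‖ ^ r := by
          gcongr ?_ * _
          exact Real.rpow_le_rpow_of_nonpos hL hx.le (by linarith)

lemma measure_norm_fourier_ge_le (hr : 1 ≤ r) (hf : Integrable f)
    (hfr : Integrable fun x => ‖f x‖ ^ r) (hL : 0 < L) {s : ℝ} (hs : 0 < s)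
    (hLs : L ^ (1 - r) * ∫ x, ‖f x‖ ^ r ≤ s / 2) :
    volume {t | s ≤ ‖𝓕 f t‖} ≤ ENNReal.ofReal (4 * (L * ∫ x, ‖f x‖) / s ^ 2) := by
  set g := {x | ‖f x‖ ≤ L}.indicator f
  set h := {x | ‖f x‖ ≤ L}ᶜ.indicator f
  have hg : Integrable g := hf.indicator₀ (nullMeasurableSet_norm_le hf L)
  have hh : Integrable h := hf.indicator₀ (nullMeasurableSet_norm_le hf L).compl
  have h_subset : {t | s ≤ ‖𝓕 f t‖} ⊆ {t | ENNReal.ofReal ((s / 2) ^ 2) ≤ ‖𝓕 g t‖ₑ ^ (2 : ℝ)} := by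
    intro t ht
    have h_split : 𝓕 f t = 𝓕 g t + 𝓕 h t := by
      rw [← fourier_add_apply hg hh, Set.indicator_self_add_compl]
    have h_le : s / 2 ≤ ‖𝓕 g t‖ := by
      linarith [ht.out, h_split ▸ norm_add_le (𝓕 g t) (𝓕 h t),
        norm_fourier_tail_le hr hf hfr hL t]
    rw [Set.mem_ofPred, ENNReal.rpow_two, ← ofReal_norm, ← ENNReal.ofReal_pow (norm_nonneg _)]
    exact ENNReal.ofReal_le_ofReal (by gcongr)
  have h_sq_pos : 0 < (s / 2) ^ 2 := by positivity
  calc volume {t | s ≤ ‖𝓕 f t‖}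
      ≤ volume {t | ENNReal.ofReal ((s / 2) ^ 2) ≤ ‖𝓕 g t‖ₑ ^ (2 : ℝ)} := measure_mono h_subset
    _ ≤ (∫⁻ t, ‖𝓕 g t‖ₑ ^ (2 : ℝ)) / ENNReal.ofReal ((s / 2) ^ 2) :=
        meas_ge_le_lintegral_div ((continuous_fourier hg).enorm.measurable.pow_const 2).aemeasurable
          (ENNReal.ofReal_pos.2 h_sq_pos).ne' ENNReal.ofReal_ne_top
    _ ≤ ENNReal.ofReal (L * ∫ x, ‖f x‖) / ENNReal.ofReal ((s / 2) ^ 2) := by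
        gcongr
        exact lintegral_enorm_sq_fourier_truncation_le hf hL.le
    _ = ENNReal.ofReal (4 * (L * ∫ x, ‖f x‖) / s ^ 2) := by
        rw [← ENNReal.ofReal_div_of_pos h_sq_pos]
        congr 1
        field_simp
        norm_num

lemma exists_measure_norm_fourier_ge_le_rpow (hr : 1 < r) (hf : Integrable f)
    (hfr : Integrable fun x => ‖f x‖ ^ r) :
    ∃ K, ∀ s > 0, volume {t | s ≤ ‖𝓕 f t‖} ≤ ENNReal.ofReal (K * s ^ (-(2 + (r - 1)⁻¹))) := by
  set A := 1 + ∫ x, ‖f x‖ ^ r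
  have hA : 0 < A := by positivity
  refine ⟨4 * ((2 * A) ^ (r - 1)⁻¹ * ∫ x, ‖f x‖), fun s hs => ?_⟩
  -- The truncation level at which the tail contributes at most `s / 2`.
  set L := (2 * A / s) ^ (r - 1)⁻¹ with hL_def
  have hL : L ^ (1 - r) = s / 2 / A := by
    rw [hL_def, ← Real.rpow_mul (by positivity), ← neg_sub r 1, mul_neg,
      inv_mul_cancel₀ (sub_pos.2 hr).ne', Real.rpow_neg_one, inv_div, div_div]
  have hLs : L ^ (1 - r) * ∫ x, ‖f x‖ ^ r ≤ s / 2 := by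
    calc L ^ (1 - r) * ∫ x, ‖f x‖ ^ r ≤ s / 2 / A * A := by
          rw [hL]
          gcongr
          exact (lt_one_add _).le
      _ = s / 2 := div_mul_cancel₀ _ hA.ne'
  refine (measure_norm_fourier_ge_le hr.le hf hfr (by positivity) hs hLs).trans_eq ?_
  rw [hL_def, Real.div_rpow (by positivity) hs.le, neg_add, Real.rpow_add hs, Real.rpow_neg hs.le,
    Real.rpow_neg hs.le, Real.rpow_two]
  congr 1
  field_simp

lemma exists_integrable_fourier_pow (hr : 1 < r) (hf : Integrable f)
    (hfr : Integrable fun x => ‖f x‖ ^ r) :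
    ∃ N : ℕ, Integrable fun t => 𝓕 f t ^ N := by
  obtain ⟨K, hK⟩ := exists_measure_norm_fourier_ge_le_rpow hr hf hfr
  obtain ⟨N, hN⟩ := exists_nat_gt (2 + (r - 1)⁻¹)
  have hN_pos : (0 : ℝ) < N := lt_trans (by have := sub_pos.2 hr; positivity) hN
  have h_cont := continuous_fourier hf
  have h_int := integrable_norm_rpow_of_measure_norm_ge_le (μ := volume)
    h_cont.aestronglyMeasurable (norm_fourier_le f) (by positivity) hN_pos hN hK
  refine ⟨N, (integrable_norm_iff (h_cont.pow N).aestronglyMeasurable).1 ?_⟩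
  simpa only [Pi.pow_apply, norm_pow, Real.rpow_natCast] using h_int

end FourierPower

section LocalBounds

variable {V : Type*} [NormedAddCommGroup V] {φ : V → ℂ}

lemma eventually_norm_le_exp_of_isLittleO {q : V → ℝ} {c : ℝ} (hc : 0 < c)
    (hqc : ∀ t, c * ‖t‖ ^ 2 ≤ q t) (hq0 : Tendsto q (𝓝 0) (𝓝 0))
    (hφ : (fun t => φ t - (1 - q t)) =o[𝓝 0] fun t => ‖t‖ ^ 2) :
    ∀ᶠ t in 𝓝 0, ‖φ t‖ ≤ Real.exp (-(c / 2) * ‖t‖ ^ 2) := by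
  filter_upwards [hφ.bound (half_pos hc), hq0.eventually (ge_mem_nhds one_pos)] with t ht hqt
  have hmain : ‖(1 - q t : ℂ)‖ = 1 - q t := by
    rw [← Complex.ofReal_one, ← Complex.ofReal_sub, Complex.norm_of_nonneg (by linarith)]
  calc ‖φ t‖ ≤ ‖(1 - q t : ℂ)‖ + ‖φ t - (1 - q t)‖ := norm_le_norm_add_norm_sub' _ _
    _ ≤ (1 - c * ‖t‖ ^ 2) + c / 2 * ‖t‖ ^ 2 := by
      rw [hmain]
      gcongr
      · exact hqc t
      · simpa using ht
    _ = -(c / 2) * ‖t‖ ^ 2 + 1 := by ring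
    _ ≤ Real.exp (-(c / 2) * ‖t‖ ^ 2) := Real.add_one_le_exp _

lemma exists_norm_le_lt_one_of_tendsto_cocompact (hφ : Continuous φ)
    (hφ0 : Tendsto φ (cocompact V) (𝓝 0)) (hlt : ∀ t ≠ 0, ‖φ t‖ < 1) {δ : ℝ} (hδ : 0 < δ) :
    ∃ η, 0 < η ∧ η < 1 ∧ ∀ t, δ ≤ ‖t‖ → ‖φ t‖ ≤ η := by
  have hhalf : ∀ᶠ t in cocompact V, ‖φ t‖ < 1 / 2 := by
    simpa using hφ0.norm.eventually_lt_const (by norm_num)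
  obtain ⟨K, hK, hKφ⟩ := mem_cocompact.mp hhalf
  have hcompact : IsCompact (K ∩ {t | δ ≤ ‖t‖}) :=
    hK.inter_right (isClosed_le continuous_const continuous_norm)
  obtain ⟨a, ha1, ha⟩ : ∃ a, -1 < a ∧ ∀ t ∈ K ∩ {t | δ ≤ ‖t‖}, a ≤ -‖φ t‖ :=
    hcompact.exists_forall_le' hφ.norm.neg.continuousOn fun t ht =>
      neg_lt_neg (hlt t (norm_pos_iff.mp (hδ.trans_le ht.2)))
  refine ⟨max (-a) (1 / 2), by positivity, max_lt (by linarith) (by norm_num), fun t ht => ?_⟩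
  by_cases htK : t ∈ K
  · exact (le_neg_of_le_neg (ha t ⟨htK, ht⟩)).trans (le_max_left _ _)
  · exact (hKφ htK).le.trans (le_max_right _ _)

end LocalBounds

section RescaledPowers

variable {V : Type*} [NormedAddCommGroup V] [NormedSpace ℝ V] {φ ψ : V → ℂ} {q : V → ℝ} {c : ℝ}

lemma tendsto_inv_sqrt_smul_nhds_zero (t : V) :
    Tendsto (fun n : ℕ => (√n)⁻¹ • t) atTop (𝓝 0) := by
  simpa using (tendsto_inv_atTop_zero.comp
    (Real.tendsto_sqrt_atTop.comp tendsto_natCast_atTop_atTop)).smul_const t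

lemma tendsto_rescaled_pow_exp (hq : ∀ (a : ℝ) t, q (a • t) = a ^ 2 * q t)
    (hφ : (fun t => φ t - (1 - q t)) =o[𝓝 0] fun t => ‖t‖ ^ 2) (t : V) :
    Tendsto (fun n : ℕ => φ ((√n)⁻¹ • t) ^ n) atTop (𝓝 (Complex.exp (-q t))) := by
  apply Complex.tendsto_pow_exp_of_isLittleO_sub_add_div
  have hlim := hφ.comp_tendsto (tendsto_inv_sqrt_smul_nhds_zero t)
  have hscale : (fun n : ℕ => ‖(√n)⁻¹ • t‖ ^ 2) =O[atTop] fun n : ℕ => 1 / (n : ℂ) :=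
    .of_bound (‖t‖ ^ 2) (.of_forall fun n => le_of_eq (by simp [norm_smul, mul_pow, mul_comm]))
  refine (hlim.trans_isBigO hscale).congr_left fun n => ?_
  simp only [Function.comp_apply, hq, inv_pow, Real.sq_sqrt n.cast_nonneg]
  push_cast
  ring

lemma norm_rescaled_pow_le_exp (hψ : ∀ t, ‖ψ t‖ ≤ Real.exp (-c * ‖t‖ ^ 2)) {n : ℕ} (hn : n ≠ 0)
    (t : V) : ‖ψ ((√n)⁻¹ • t) ^ n‖ ≤ Real.exp (-c * ‖t‖ ^ 2) := by
  calc ‖ψ ((√n)⁻¹ • t) ^ n‖ ≤ Real.exp (-c * ‖(√n)⁻¹ • t‖ ^ 2) ^ n := by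
        rw [norm_pow]
        gcongr
        exact hψ _
    _ = Real.exp (-c * ‖t‖ ^ 2) := by
      rw [← Real.exp_nat_mul, norm_smul, mul_pow, norm_inv, inv_pow, Real.norm_eq_abs, sq_abs,
        Real.sq_sqrt n.cast_nonneg]
      field_simp

end RescaledPowers

section RescaledPowersIntegral

variable {V : Type*} [NormedAddCommGroup V] [InnerProductSpace ℝ V] [FiniteDimensional ℝ V]
  [MeasurableSpace V] [BorelSpace V] {φ ψ χ : V → ℂ} {q : V → ℝ} {c : ℝ}

lemma integrable_exp_neg_mul_norm_sq (hc : 0 < c) :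
    Integrable fun t : V => Real.exp (-c * ‖t‖ ^ 2) := by
  simpa [Complex.norm_exp, ← Complex.ofReal_pow] using
    (GaussianFourier.integrable_cexp_neg_mul_sq_norm_add (V := V) (b := c) (by simpa) 0 0).norm

lemma integrable_cexp_neg_of_le (hqm : Measurable q) (hc : 0 < c) (hqc : ∀ t, c * ‖t‖ ^ 2 ≤ q t) :
    Integrable fun t => Complex.exp (-q t) := by
  refine (integrable_exp_neg_mul_norm_sq hc).mono' (by fun_prop) (.of_forall fun t => ?_)
  rw [← Complex.ofReal_neg, Complex.norm_exp_ofReal, neg_mul]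
  exact Real.exp_le_exp.mpr (neg_le_neg (hqc t))

lemma integrable_rescaled_pow (hψm : Measurable ψ) (hc : 0 < c)
    (hψ : ∀ t, ‖ψ t‖ ≤ Real.exp (-c * ‖t‖ ^ 2)) {n : ℕ} (hn : n ≠ 0) :
    Integrable fun t => ψ ((√n)⁻¹ • t) ^ n :=
  (integrable_exp_neg_mul_norm_sq hc).mono'
    ((hψm.comp (measurable_const_smul _)).pow_const n).aestronglyMeasurable
    (.of_forall (norm_rescaled_pow_le_exp hψ hn))

lemma integrable_pow_of_norm_le_one (hφm : Measurable φ) (hφ1 : ∀ t, ‖φ t‖ ≤ 1) {N n : ℕ}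
    (hφN : Integrable fun t => φ t ^ N) (hn : N ≤ n) : Integrable fun t => φ t ^ n := by
  refine hφN.mono (hφm.pow_const n).aestronglyMeasurable (.of_forall fun t => ?_)
  rw [norm_pow, norm_pow]
  exact pow_le_pow_of_le_one (norm_nonneg _) (hφ1 t) hn

lemma tendsto_integral_norm_rescaled_pow_sub_exp (hψm : Measurable ψ) (hc : 0 < c)
    (hψ : ∀ t, ‖ψ t‖ ≤ Real.exp (-c * ‖t‖ ^ 2))
    (hlim : ∀ t, Tendsto (fun n : ℕ => ψ ((√n)⁻¹ • t) ^ n) atTop (𝓝 (Complex.exp (-q t)))) :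
    Tendsto (fun n : ℕ => ∫ t, ‖ψ ((√n)⁻¹ • t) ^ n - Complex.exp (-q t)‖) atTop (𝓝 0) := by
  have hmeas (n : ℕ) : Measurable fun t : V => ψ ((√n)⁻¹ • t) ^ n :=
    (hψm.comp (measurable_const_smul _)).pow_const n
  have hexp (t : V) : ‖Complex.exp (-q t)‖ ≤ Real.exp (-c * ‖t‖ ^ 2) :=
    le_of_tendsto (hlim t).norm <| (eventually_ne_atTop 0).mono fun n hn =>
      norm_rescaled_pow_le_exp hψ hn t
  have hexpm : Measurable fun t => Complex.exp (-q t) :=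
    measurable_of_tendsto_metrizable hmeas (tendsto_pi_nhds.mpr hlim)
  rw [← integral_zero V ℝ]
  refine tendsto_integral_filter_of_dominated_convergence
    (fun t => 2 * Real.exp (-c * ‖t‖ ^ 2)) ?_ ?_
    ((integrable_exp_neg_mul_norm_sq hc).const_mul 2) (.of_forall fun t => ?_)
  · exact .of_forall fun n => ((hmeas n).sub hexpm).norm.aestronglyMeasurable
  · filter_upwards [eventually_ne_atTop 0] with n hn
    filter_upwards with t
    rw [norm_norm, two_mul]
    exact (norm_sub_le _ _).trans (add_le_add (norm_rescaled_pow_le_exp hψ hn t) (hexp t))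
  · exact tendsto_iff_norm_sub_tendsto_zero.mp (hlim t)

lemma integral_norm_rescaled_pow_le {η : ℝ} (hχη : ∀ t, ‖χ t‖ ≤ η) {N n : ℕ}
    (hχN : Integrable fun t => χ t ^ N) (hn : N ≤ n) :
    ∫ t, ‖χ ((√n)⁻¹ • t) ^ n‖ ≤
      √n ^ Module.finrank ℝ V * (η ^ (n - N) * ∫ t, ‖χ t ^ N‖) := by
  rw [Measure.integral_comp_inv_smul_of_nonneg volume (fun t => ‖χ t ^ n‖) (Real.sqrt_nonneg _),
    smul_eq_mul]
  gcongr
  rw [← integral_const_mul]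
  refine integral_mono_of_nonneg (.of_forall fun _ => norm_nonneg _) (hχN.norm.const_mul _)
    (.of_forall fun t => ?_)
  calc ‖χ t ^ n‖ = ‖χ t‖ ^ (n - N) * ‖χ t ^ N‖ := by
        rw [norm_pow, norm_pow, ← pow_add, Nat.sub_add_cancel hn]
    _ ≤ η ^ (n - N) * ‖χ t ^ N‖ := by gcongr; exact hχη t

lemma tendsto_integral_norm_rescaled_pow_zero {η : ℝ} (hη0 : 0 < η) (hη1 : η < 1)
    (hχη : ∀ t, ‖χ t‖ ≤ η) {N : ℕ} (hχN : Integrable fun t => χ t ^ N) :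
    Tendsto (fun n : ℕ => ∫ t, ‖χ ((√n)⁻¹ • t) ^ n‖) atTop (𝓝 0) := by
  set d := Module.finrank ℝ V
  set J := ∫ t, ‖χ t ^ N‖
  have hdecay : Tendsto (fun n : ℕ => (n : ℝ) ^ d * η ^ n * (η⁻¹ ^ N * J)) atTop (𝓝 0) := by
    simpa using (tendsto_pow_const_mul_const_pow_of_lt_one d hη0.le hη1).mul_const (η⁻¹ ^ N * J)
  refine squeeze_zero' (.of_forall fun n => integral_nonneg fun t => norm_nonneg _) ?_ hdecay
  filter_upwards [eventually_ge_atTop (max N 1)] with n hn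
  have hNn : N ≤ n := (le_max_left _ _).trans hn
  have hsqrt : √n ≤ n :=
    Real.sqrt_le_self_iff.mpr (.inr (by exact_mod_cast (le_max_right N 1).trans hn))
  calc ∫ t, ‖χ ((√n)⁻¹ • t) ^ n‖ ≤ √n ^ d * (η ^ (n - N) * J) :=
        integral_norm_rescaled_pow_le hχη hχN hNn
    _ ≤ n ^ d * (η ^ (n - N) * J) := by gcongr
    _ = n ^ d * η ^ n * (η⁻¹ ^ N * J) := by
      rw [pow_sub₀ _ hη0.ne' hNn, inv_pow]
      ring

lemma integral_norm_rescaled_pow_sub_le {B : Set V} {e : V → ℂ} {n : ℕ} (hn : n ≠ 0)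
    (hnear : Integrable fun t => B.indicator φ ((√n)⁻¹ • t) ^ n - e t)
    (hfar : Integrable fun t => Bᶜ.indicator φ ((√n)⁻¹ • t) ^ n) :
    ∫ t, ‖φ ((√n)⁻¹ • t) ^ n - e t‖ ≤
      (∫ t, ‖B.indicator φ ((√n)⁻¹ • t) ^ n - e t‖) +
        ∫ t, ‖Bᶜ.indicator φ ((√n)⁻¹ • t) ^ n‖ := by
  have hsplit (s : V) (z : ℂ) :
      ‖φ s ^ n - z‖ ≤ ‖B.indicator φ s ^ n - z‖ + ‖Bᶜ.indicator φ s ^ n‖ := by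
    by_cases hs : s ∈ B
    · simp [hs, hn]
    · simpa [hs, hn, add_comm] using norm_sub_le (φ s ^ n) z
  rw [← integral_add hnear.norm hfar.norm]
  exact integral_mono_of_nonneg (.of_forall fun _ => norm_nonneg _) (hnear.norm.add hfar.norm)
    (.of_forall fun _ => hsplit _ _)

lemma tendsto_integral_norm_rescaled_pow_sub_exp_of_isLittleO (hφ : Continuous φ)
    (hφ0 : Tendsto φ (cocompact V) (𝓝 0)) (hφ1 : ∀ t, ‖φ t‖ ≤ 1)
    (hlt : ∀ t ≠ 0, ‖φ t‖ < 1) {N : ℕ} (hφN : Integrable fun t => φ t ^ N)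
    (hq : ∀ (a : ℝ) t, q (a • t) = a ^ 2 * q t) (hqcont : Continuous q)
    (hc : 0 < c) (hqc : ∀ t, c * ‖t‖ ^ 2 ≤ q t)
    (hexp : (fun t => φ t - (1 - q t)) =o[𝓝 0] fun t => ‖t‖ ^ 2) :
    Tendsto (fun n : ℕ => ∫ t, ‖φ ((√n)⁻¹ • t) ^ n - Complex.exp (-q t)‖) atTop (𝓝 0) := by
  have hq0 : Tendsto q (𝓝 0) (𝓝 0) := hqcont.tendsto' 0 0 (by simpa using hq 0 0)
  obtain ⟨δ, hδ, hnear⟩ := Metric.eventually_nhds_iff_ball.mp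
    (eventually_norm_le_exp_of_isLittleO hc hqc hq0 hexp)
  obtain ⟨η, hη0, hη1, hfar⟩ := exists_norm_le_lt_one_of_tendsto_cocompact hφ hφ0 hlt hδ
  set B : Set V := Metric.ball 0 δ
  have hψm : Measurable (B.indicator φ) := hφ.measurable.indicator measurableSet_ball
  have hχm : Measurable (Bᶜ.indicator φ) := hφ.measurable.indicator measurableSet_ball.compl
  have hψ (t : V) : ‖B.indicator φ t‖ ≤ Real.exp (-(c / 2) * ‖t‖ ^ 2) := by
    rw [norm_indicator_eq_indicator_norm]
    exact Set.indicator_apply_le' (hnear t) fun _ => (Real.exp_pos _).le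
  have hψexp : (fun t => B.indicator φ t - (1 - q t)) =o[𝓝 0] fun t => ‖t‖ ^ 2 :=
    hexp.congr' (mem_of_superset (Metric.ball_mem_nhds 0 hδ) fun t ht => by simp [B, ht]) .rfl
  have hχ (t : V) : ‖Bᶜ.indicator φ t‖ ≤ η := by
    rw [norm_indicator_eq_indicator_norm]
    exact Set.indicator_apply_le' (fun ht => hfar t (by simpa [B] using ht)) fun _ => hη0.le
  have hχN : Integrable fun t => Bᶜ.indicator φ t ^ (N + 1) := by
    refine (integrable_pow_of_norm_le_one hφ.measurable hφ1 hφN N.le_succ).mono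
      (hχm.pow_const _).aestronglyMeasurable (.of_forall fun t => ?_)
    rw [norm_pow, norm_pow]
    gcongr
    exact norm_indicator_le_norm_self φ t
  have hlim := (tendsto_integral_norm_rescaled_pow_sub_exp hψm (half_pos hc) hψ
    (tendsto_rescaled_pow_exp hq hψexp)).add
      (tendsto_integral_norm_rescaled_pow_zero hη0 hη1 hχ hχN)
  rw [add_zero] at hlim
  refine squeeze_zero' (.of_forall fun n => integral_nonneg fun t => norm_nonneg _) ?_ hlim
  filter_upwards [eventually_ge_atTop (N + 1)] with n hn
  have hn0 : n ≠ 0 := by omega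
  refine integral_norm_rescaled_pow_sub_le hn0
    ((integrable_rescaled_pow hψm (half_pos hc) hψ hn0).sub
      (integrable_cexp_neg_of_le hqcont.measurable hc hqc)) ?_
  exact (integrable_pow_of_norm_le_one hχm (fun t => (hχ t).trans hη1.le) hχN hn).comp_smul
    (by positivity)

end RescaledPowersIntegral
section NormedMoments

variable {V : Type*} [NormedAddCommGroup V]

lemma norm_four_mul_norm_sq_mul_min_le (x t : V) :
    ‖4 * (‖x‖ ^ 2 * min 1 (‖x‖ * ‖t‖))‖ ≤ 4 * ‖x‖ ^ 2 := by
  rw [Real.norm_of_nonneg (by positivity)]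
  gcongr
  exact mul_le_of_le_one_right (by positivity) (min_le_left _ _)

lemma tendsto_natCast_smul_cocompact [ProperSpace V] [NormedSpace ℝ V] {t : V} (ht : t ≠ 0) :
    Tendsto (fun m : ℕ => (m : ℝ) • t) atTop (cocompact V) := by
  rw [← Metric.cobounded_eq_cocompact, ← tendsto_norm_atTop_iff_cobounded]
  simpa [norm_smul] using tendsto_natCast_atTop_atTop.atTop_mul_const (norm_pos_iff.2 ht)

variable [MeasurableSpace V] [BorelSpace V] {μ : Measure V}

lemma integrable_norm_sq_mul_min (hμ : MemLp id 2 μ) (t : V) :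
    Integrable (fun x => 4 * (‖x‖ ^ 2 * min 1 (‖x‖ * ‖t‖))) μ :=
  ((hμ.integrable_norm_pow two_ne_zero).const_mul 4).mono' (by fun_prop)
    (.of_forall fun x => norm_four_mul_norm_sq_mul_min_le x t)

lemma tendsto_integral_norm_sq_mul_min_zero (hμ : MemLp id 2 μ) :
    Tendsto (fun t : V => ∫ x, 4 * (‖x‖ ^ 2 * min 1 (‖x‖ * ‖t‖)) ∂μ) (𝓝 0) (𝓝 0) := by
  rw [← integral_zero V ℝ]
  exact tendsto_integral_filter_of_dominated_convergence (fun x => 4 * ‖x‖ ^ 2)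
    (.of_forall fun t => (integrable_norm_sq_mul_min hμ t).aestronglyMeasurable)
    (.of_forall fun t => .of_forall fun x => norm_four_mul_norm_sq_mul_min_le x t)
    ((hμ.integrable_norm_pow two_ne_zero).const_mul 4)
    (.of_forall fun x => Continuous.tendsto' (by fun_prop) _ _ (by simp))

end NormedMoments

section CharFun

lemma norm_exp_mul_I_sub_le (y : ℝ) :
    ‖Complex.exp (y * Complex.I) - (1 + y * Complex.I - (y : ℂ) ^ 2 / 2)‖
      ≤ 4 * (y ^ 2 * min 1 |y|) := by
  rcases le_total |y| 1 with hy | hy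
  · have hsum : ∑ m ∈ Finset.range 3, (y * Complex.I) ^ m / (m.factorial : ℂ)
        = 1 + y * Complex.I - (y : ℂ) ^ 2 / 2 := by
      simp only [Finset.sum_range_succ, Finset.sum_range_zero, mul_pow, Complex.I_sq,
        Nat.factorial, pow_zero, pow_one]
      push_cast
      ring
    have hexp : Real.exp |y| ≤ 4 :=
      (Real.exp_le_exp.2 hy).trans (Real.exp_one_lt_d9.le.trans (by norm_num))
    have htaylor := Complex.norm_exp_sub_sum_le_norm_mul_exp (y * Complex.I) 3
    rw [hsum, norm_mul, Complex.norm_I, mul_one, Complex.norm_real, Real.norm_eq_abs] at htaylor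
    calc _ ≤ |y| ^ 3 * Real.exp |y| := htaylor
      _ ≤ |y| ^ 3 * 4 := by gcongr
      _ = 4 * (y ^ 2 * min 1 |y|) := by rw [min_eq_right hy, ← sq_abs]; ring
  · have hpoly : ‖1 + y * Complex.I - (y : ℂ) ^ 2 / 2‖ ≤ 1 + |y| + y ^ 2 / 2 := by
      refine (norm_sub_le _ _).trans (add_le_add ((norm_add_le _ _).trans ?_) ?_) <;> simp
    calc _ ≤ 1 + (1 + |y| + y ^ 2 / 2) := (norm_sub_le _ _).trans
          (add_le_add (Complex.norm_exp_ofReal_mul_I y).le hpoly)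
      _ ≤ 4 * (y ^ 2 * min 1 |y|) := by
        rw [min_eq_left hy, ← sq_abs]
        nlinarith

variable {V : Type*} [NormedAddCommGroup V] [InnerProductSpace ℝ V]

lemma norm_exp_inner_sub_le (x t : V) :
    ‖Complex.exp (inner ℝ x t * Complex.I) -
        (1 + inner ℝ x t * Complex.I - (inner ℝ x t : ℂ) ^ 2 / 2)‖
      ≤ 4 * (‖x‖ ^ 2 * min 1 (‖x‖ * ‖t‖)) * ‖t‖ ^ 2 := by
  calc _ ≤ 4 * (|inner ℝ x t| ^ 2 * min 1 |inner ℝ x t|) := by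
        rw [sq_abs]
        exact norm_exp_mul_I_sub_le _
    _ ≤ 4 * ((‖x‖ * ‖t‖) ^ 2 * min 1 (‖x‖ * ‖t‖)) := by
      gcongr <;> exact abs_real_inner_le_norm x t
    _ = 4 * (‖x‖ ^ 2 * min 1 (‖x‖ * ‖t‖)) * ‖t‖ ^ 2 := by ring

variable [MeasurableSpace V] {μ : Measure V}

lemma integrable_inner_sq (hμ : MemLp id 2 μ) (t : V) :
    Integrable (fun x => inner ℝ x t ^ 2) μ :=
  (hμ.inner_const t).integrable_sq

variable [IsProbabilityMeasure μ]

lemma charFun_natCast_smul_of_ae_eq {t : V} {z : ℂ}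
    (h : ∀ᵐ x ∂μ, Complex.exp (inner ℝ x t * Complex.I) = z) (m : ℕ) :
    charFun μ ((m : ℝ) • t) = z ^ m := by
  have hm : ∀ᵐ x ∂μ, Complex.exp (inner ℝ x ((m : ℝ) • t) * Complex.I) = z ^ m := by
    filter_upwards [h] with x hx
    rw [← hx, ← Complex.exp_nat_mul, inner_smul_right]
    push_cast
    ring_nf
  rw [charFun_apply, integral_congr_ae hm]
  simp

/-- If `‖charFun μ t‖ = 1`, then `x ↦ exp (i * inner ℝ x t)` is almost surely constant, so the
modulus of `charFun μ` equals `1` on all multiples of `t`. -/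
lemma norm_charFun_lt_one [ProperSpace V] (hμ : Tendsto (charFun μ) (cocompact V) (𝓝 0)) {t : V}
    (ht : t ≠ 0) : ‖charFun μ t‖ < 1 := by
  rcases ae_eq_const_or_norm_integral_lt_of_norm_le_const (μ := μ) (C := 1)
    (f := fun x => Complex.exp (inner ℝ x t * Complex.I))
    (.of_forall fun x => (Complex.norm_exp_ofReal_mul_I _).le) with hconst | hlt
  · by_contra! hge
    rw [average_eq_integral, ← charFun_apply] at hconst
    have hpow := charFun_natCast_smul_of_ae_eq hconst
    have hlim := (hμ.comp (tendsto_natCast_smul_cocompact ht)).norm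
    rw [norm_zero] at hlim
    obtain ⟨m, hm⟩ := (hlim.eventually_lt_const one_pos).exists
    rw [Function.comp_apply, hpow, norm_pow] at hm
    exact hm.not_ge (one_le_pow₀ hge)
  · simpa [charFun_apply] using hlt

variable [BorelSpace V]

lemma charFun_sub_eq_integral (hμ : MemLp id 2 μ) (hcent : ∀ t, ∫ x, inner ℝ x t ∂μ = 0) (t : V) :
    charFun μ t - (1 - (∫ x, inner ℝ x t ^ 2 ∂μ : ℝ) / 2) =
      ∫ x, (Complex.exp (inner ℝ x t * Complex.I) -
        (1 + inner ℝ x t * Complex.I - (inner ℝ x t : ℂ) ^ 2 / 2)) ∂μ := by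
  have hexp : Integrable (fun x => Complex.exp (inner ℝ x t * Complex.I)) μ :=
    .of_bound (by fun_prop) 1 (.of_forall fun x => (Complex.norm_exp_ofReal_mul_I _).le)
  have hinner : Integrable (fun x => (inner ℝ x t * Complex.I : ℂ)) μ :=
    ((hμ.inner_const t).integrable one_le_two).ofReal.mul_const _
  have hsq : Integrable (fun x => (inner ℝ x t : ℂ) ^ 2 / 2) μ := by
    simpa using (integrable_inner_sq hμ t).ofReal.div_const (2 : ℂ)
  have hlin : Integrable (fun x => (1 + inner ℝ x t * Complex.I : ℂ)) μ :=
    (integrable_const 1).add hinner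
  have hpoly : Integrable
      (fun x => (1 + inner ℝ x t * Complex.I - (inner ℝ x t : ℂ) ^ 2 / 2)) μ := hlin.sub hsq
  have hmean : ∫ x, (inner ℝ x t : ℂ) ∂μ = 0 := by
    rw [integral_complex_ofReal, hcent, Complex.ofReal_zero]
  have hvar : ∫ x, (inner ℝ x t : ℂ) ^ 2 ∂μ = (∫ x, inner ℝ x t ^ 2 ∂μ : ℝ) := by
    simp only [← integral_complex_ofReal, Complex.ofReal_pow]
  rw [integral_sub hexp hpoly, integral_sub hlin hsq, integral_add (integrable_const 1) hinner,
    integral_mul_const, integral_div, hmean, hvar, charFun_apply]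
  simp

lemma charFun_sub_isLittleO (hμ : MemLp id 2 μ) (hcent : ∀ t, ∫ x, inner ℝ x t ∂μ = 0) :
    (fun t => charFun μ t - (1 - (∫ x, inner ℝ x t ^ 2 ∂μ : ℝ) / 2))
      =o[𝓝 0] fun t => ‖t‖ ^ 2 := by
  have hbound : (fun t => charFun μ t - (1 - (∫ x, inner ℝ x t ^ 2 ∂μ : ℝ) / 2)) =O[𝓝 0]
      fun t => (∫ x, 4 * (‖x‖ ^ 2 * min 1 (‖x‖ * ‖t‖)) ∂μ) * ‖t‖ ^ 2 := by
    refine .of_norm_le fun t => ?_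
    rw [charFun_sub_eq_integral hμ hcent, ← integral_mul_const]
    exact norm_integral_le_of_norm_le ((integrable_norm_sq_mul_min hμ t).mul_const _)
      (.of_forall fun x => norm_exp_inner_sub_le x t)
  refine hbound.trans_isLittleO ?_
  simpa using ((Asymptotics.isLittleO_one_iff ℝ).mpr
    (tendsto_integral_norm_sq_mul_min_zero hμ)).mul_isBigO
      (Asymptotics.isBigO_refl (fun t : V => ‖t‖ ^ 2) (𝓝 0))

end CharFun

section Density

variable {V : Type*} [NormedAddCommGroup V] [InnerProductSpace ℝ V] [FiniteDimensional ℝ V]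
  [MeasurableSpace V] [BorelSpace V] {f : V → ℝ}

/-- The measure with density `f` with respect to Lebesgue measure, through which the Fourier
transform of `f` is read as a characteristic function. Negative values of `f` count as `0`. -/
def densityMeasure (f : V → ℝ) : Measure V :=
  volume.withDensity fun x => ENNReal.ofReal (f x)

variable (hf : Integrable f) (h0 : ∀ x, 0 ≤ f x)
include hf h0

lemma integral_densityMeasure {E : Type*} [NormedAddCommGroup E] [NormedSpace ℝ E] (g : V → E) :
    ∫ x, g x ∂(densityMeasure f) = ∫ x, f x • g x := by
  rw [densityMeasure, integral_withDensity_eq_integral_toReal_smul₀ hf.1.aemeasurable.ennreal_ofReal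
    (.of_forall fun _ => ENNReal.ofReal_lt_top)]
  simp only [ENNReal.toReal_ofReal (h0 _)]

lemma integrable_densityMeasure_iff {g : V → ℝ} :
    Integrable g (densityMeasure f) ↔ Integrable fun x => f x • g x := by
  rw [densityMeasure, integrable_withDensity_iff_integrable_smul₀' hf.1.aemeasurable.ennreal_ofReal
    (.of_forall fun _ => ENNReal.ofReal_lt_top)]
  simp only [ENNReal.toReal_ofReal (h0 _)]

lemma isProbabilityMeasure_densityMeasure (h1 : ∫ x, f x = 1) :
    IsProbabilityMeasure (densityMeasure f) where
  measure_univ := by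
    rw [densityMeasure, withDensity_apply _ .univ, setLIntegral_univ,
      ← ofReal_integral_eq_lintegral_ofReal hf (.of_forall h0), h1, ENNReal.ofReal_one]

lemma fourier_ofReal_eq_charFun (t : V) :
    𝓕 (fun x => (f x : ℂ)) t = charFun (densityMeasure f) (-(2 * Real.pi) • t) := by
  rw [charFun_apply, integral_densityMeasure hf h0, Real.fourier_eq']
  refine integral_congr_ae (.of_forall fun x => ?_)
  simp only [inner_smul_right, Complex.real_smul, smul_eq_mul, neg_mul, mul_comm (f x : ℂ)]

lemma charFun_densityMeasure_eq_fourier (s : V) :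
    charFun (densityMeasure f) s = 𝓕 (fun x => (f x : ℂ)) ((-(2 * Real.pi))⁻¹ • s) := by
  rw [fourier_ofReal_eq_charFun hf h0, smul_inv_smul₀ (by simp [Real.pi_ne_zero])]

lemma tendsto_charFun_densityMeasure_cocompact :
    Tendsto (charFun (densityMeasure f)) (cocompact V) (𝓝 0) := by
  rw [funext (charFun_densityMeasure_eq_fourier hf h0)]
  exact (tendsto_integral_exp_inner_smul_cocompact _).comp
    (Homeomorph.smulOfNeZero (-(2 * Real.pi))⁻¹
      (by simp [Real.pi_ne_zero])).isClosedEmbedding.tendsto_cocompact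

lemma memLp_id_densityMeasure (h2 : Integrable fun x => f x * ‖x‖ ^ 2) :
    MemLp id 2 (densityMeasure f) :=
  (memLp_two_iff_integrable_sq_norm aestronglyMeasurable_id).2
    ((integrable_densityMeasure_iff hf h0).2 h2)

lemma integrable_mul_inner (h2 : Integrable fun x => f x * ‖x‖ ^ 2) (t : V) :
    Integrable fun x => f x * inner ℝ x t := by
  have : IsFiniteMeasure (densityMeasure f) := isFiniteMeasure_withDensity_ofReal hf.2
  exact (integrable_densityMeasure_iff hf h0).1
    (((memLp_id_densityMeasure hf h0 h2).inner_const t).integrable one_le_two)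

variable (h1 : ∫ x, f x = 1)
include h1

lemma norm_fourier_density_le_one (t : V) : ‖𝓕 (fun x => (f x : ℂ)) t‖ ≤ 1 := by
  have := isProbabilityMeasure_densityMeasure hf h0 h1
  rw [fourier_ofReal_eq_charFun hf h0]
  exact norm_charFun_le_one _

lemma norm_fourier_density_lt_one {t : V} (ht : t ≠ 0) : ‖𝓕 (fun x => (f x : ℂ)) t‖ < 1 := by
  have := isProbabilityMeasure_densityMeasure hf h0 h1
  rw [fourier_ofReal_eq_charFun hf h0]
  exact norm_charFun_lt_one (tendsto_charFun_densityMeasure_cocompact hf h0)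
    (smul_ne_zero (by simp [Real.pi_ne_zero]) ht)

lemma fourier_density_sub_isLittleO (h2 : Integrable fun x => f x * ‖x‖ ^ 2)
    (hcent : ∀ t, ∫ x, f x * inner ℝ x t = 0) :
    (fun t => 𝓕 (fun x => (f x : ℂ)) t -
        (1 - (2 * Real.pi ^ 2 * ∫ x, f x * inner ℝ x t ^ 2 : ℝ)))
      =o[𝓝 0] fun t => ‖t‖ ^ 2 := by
  have := isProbabilityMeasure_densityMeasure hf h0 h1
  have hmean (t : V) : ∫ x, inner ℝ x t ∂(densityMeasure f) = 0 := by
    simpa [integral_densityMeasure hf h0] using hcent t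
  have hscale : Tendsto (fun t : V => -(2 * Real.pi) • t) (𝓝 0) (𝓝 0) :=
    Continuous.tendsto' (by fun_prop) _ _ (by simp)
  have hexp := (charFun_sub_isLittleO (memLp_id_densityMeasure hf h0 h2) hmean).comp_tendsto hscale
  refine (hexp.congr_left fun t => ?_).trans_isBigO ?_
  · simp only [Function.comp_apply, fourier_ofReal_eq_charFun hf h0, integral_densityMeasure hf h0,
      inner_smul_right, mul_pow, smul_eq_mul, mul_left_comm (f _), integral_const_mul]
    push_cast
    ring
  · refine .of_bound ((2 * Real.pi) ^ 2) (.of_forall fun t => ?_)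
    simp [norm_smul, mul_pow]

end Density

section LocalLimit

variable {V : Type*} [NormedAddCommGroup V] [InnerProductSpace ℝ V] [FiniteDimensional ℝ V]

lemma exists_mul_norm_sq_le_norm_sq_apply {L : V →ₗ[ℝ] V} (hL : LinearMap.det L ≠ 0) :
    ∃ c > 0, ∀ t, c * ‖t‖ ^ 2 ≤ ‖L t‖ ^ 2 := by
  have hker : LinearMap.ker L = ⊥ := by
    by_contra h
    exact hL (LinearMap.det_eq_zero_iff_ker_ne_bot.2 h)
  obtain ⟨K, hK, hanti⟩ := L.exists_antilipschitzWith hker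
  refine ⟨((K : ℝ) ^ 2)⁻¹, by positivity, fun t => ?_⟩
  have ht : ‖t‖ ≤ K * ‖L t‖ := by simpa using hanti.le_mul_dist t 0
  rw [inv_mul_le_iff₀ (by positivity), ← mul_pow]
  gcongr

variable [MeasurableSpace V] [BorelSpace V] {f : V → ℝ} {r : ℝ} {L : V →ₗ[ℝ] V}

lemma eventually_integrable_fourier_pow (hr : 1 < r) (hf : Integrable f) (h0 : ∀ x, 0 ≤ f x)
    (h1 : ∫ x, f x = 1) (hfr : Integrable fun x => |f x| ^ r) :
    ∀ᶠ n : ℕ in atTop, Integrable (𝓕 (fun x => (f x : ℂ)) ^ n) := by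
  obtain ⟨N, hN⟩ := exists_integrable_fourier_pow hr hf.ofReal (by simpa using hfr)
  filter_upwards [eventually_ge_atTop N] with n hn
  exact integrable_pow_of_norm_le_one (continuous_fourier hf.ofReal).measurable
    (norm_fourier_density_le_one hf h0 h1) hN hn

lemma tendsto_integral_norm_fourier_rescaled_pow_sub_gaussian (hr : 1 < r) (hf : Integrable f)
    (h0 : ∀ x, 0 ≤ f x) (h1 : ∫ x, f x = 1) (hfr : Integrable fun x => |f x| ^ r)
    (h2 : Integrable fun x => f x * ‖x‖ ^ 2) (hcent : ∀ t, ∫ x, f x * inner ℝ x t = 0)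
    (hL : LinearMap.det L ≠ 0) (hcov : ∀ t, ∫ x, f x * inner ℝ x t ^ 2 = ‖L t‖ ^ 2) :
    Tendsto (fun n : ℕ => ∫ t, ‖𝓕 (fun x => (f x : ℂ)) ((√n)⁻¹ • t) ^ n -
      Complex.exp (-(2 * Real.pi ^ 2) * ‖L t‖ ^ 2)‖) atTop (𝓝 0) := by
  obtain ⟨N, hN⟩ := exists_integrable_fourier_pow hr hf.ofReal (by simpa using hfr)
  obtain ⟨c, hc, hLc⟩ := exists_mul_norm_sq_le_norm_sq_apply hL
  have hexp := fourier_density_sub_isLittleO hf h0 h1 h2 hcent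
  simp only [hcov] at hexp
  have hlim := tendsto_integral_norm_rescaled_pow_sub_exp_of_isLittleO
    (q := fun t => 2 * Real.pi ^ 2 * ‖L t‖ ^ 2) (c := 2 * Real.pi ^ 2 * c)
    (continuous_fourier hf.ofReal)
    (tendsto_integral_exp_inner_smul_cocompact _) (norm_fourier_density_le_one hf h0 h1)
    (fun t => norm_fourier_density_lt_one hf h0 h1) hN
    (fun a t => by rw [map_smul, norm_smul, mul_pow, Real.norm_eq_abs, sq_abs]; ring)
    (by fun_prop) (by positivity)
    (fun t => by rw [mul_assoc]; gcongr; exact hLc t) hexp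
  simpa using hlim

lemma tendstoUniformly_fourierInv_fourier_pow (hr : 1 < r) (hf : Integrable f)
    (h0 : ∀ x, 0 ≤ f x) (h1 : ∫ x, f x = 1) (hfr : Integrable fun x => |f x| ^ r)
    (h2 : Integrable fun x => f x * ‖x‖ ^ 2) (hcent : ∀ t, ∫ x, f x * inner ℝ x t = 0)
    (hL : LinearMap.det L ≠ 0) (hcov : ∀ t, ∫ x, f x * inner ℝ x t ^ 2 = ‖L t‖ ^ 2) :
    TendstoUniformly
      (fun (n : ℕ) w => √n ^ Module.finrank ℝ V • 𝓕⁻ (𝓕 (fun x => (f x : ℂ)) ^ n) (√n • w))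
      (𝓕⁻ fun t => Complex.exp (-(2 * Real.pi ^ 2) * ‖L t‖ ^ 2)) atTop := by
  obtain ⟨c, hc, hLc⟩ := exists_mul_norm_sq_le_norm_sq_apply hL
  have hpow : ∀ᶠ n : ℕ in atTop,
      Integrable fun t => 𝓕 (fun x => (f x : ℂ)) ((√n)⁻¹ • t) ^ n := by
    filter_upwards [eventually_integrable_fourier_pow hr hf h0 h1 hfr, eventually_gt_atTop 0]
      with n hn hn0
    exact hn.comp_smul (by positivity)
  have hgauss : Integrable fun t => Complex.exp (-(2 * Real.pi ^ 2) * ‖L t‖ ^ 2) := by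
    have hq := integrable_cexp_neg_of_le (q := fun t => 2 * Real.pi ^ 2 * ‖L t‖ ^ 2)
      (c := 2 * Real.pi ^ 2 * c) (by fun_prop) (by positivity)
      (fun t => by rw [mul_assoc]; gcongr; exact hLc t)
    push_cast at hq
    simpa only [neg_mul] using hq
  refine (tendstoUniformly_congr ?_).1 (tendstoUniformly_fourierInv_of_tendsto_integral_norm_sub
    hpow hgauss (tendsto_integral_norm_fourier_rescaled_pow_sub_gaussian hr hf h0 h1 hfr h2 hcent hL
      hcov))
  filter_upwards [eventually_gt_atTop 0] with n hn
  exact funext (fourierInv_comp_inv_smul (by positivity) (𝓕 (fun x => (f x : ℂ)) ^ n))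

end LocalLimit

section Matrix

variable {k : Type*} [Fintype k]

lemma det_toEuclideanLin [DecidableEq k] (B : Matrix k k ℝ) :
    LinearMap.det B.toEuclideanLin = B.det := by
  rw [Matrix.toEuclideanLin_eq_toLin_orthonormal, LinearMap.det_toLin]

lemma norm_sq_toEuclideanLin_apply [DecidableEq k] (B : Matrix k k ℝ) (t : EuclideanSpace ℝ k) :
    ‖B.toEuclideanLin t‖ ^ 2 = t.ofLp ⬝ᵥ (Bᵀ * B) *ᵥ t.ofLp := by
  rw [EuclideanSpace.real_norm_sq_eq, ← mulVec_mulVec, dotProduct_mulVec, vecMul_transpose]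
  simp [dotProduct, sq]

lemma inner_sq_eq_sum (x t : EuclideanSpace ℝ k) :
    inner ℝ x t ^ 2 = ∑ j, ∑ l, t j * t l * (x j * x l) := by
  simp only [PiLp.inner_apply, RCLike.inner_apply, conj_trivial, sq, Finset.sum_mul_sum]
  exact Finset.sum_congr rfl fun j _ => Finset.sum_congr rfl fun l _ => by ring

lemma dotProduct_inv_mulVec_transpose_mulVec [DecidableEq k] {B : Matrix k k ℝ}
    (hB : IsUnit B.det) (w : k → ℝ) :
    (Bᵀ *ᵥ w) ⬝ᵥ (Bᵀ * B)⁻¹ *ᵥ (Bᵀ *ᵥ w) = w ⬝ᵥ w := by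
  have hBt : IsUnit Bᵀ.det := by rwa [det_transpose]
  rw [Matrix.mul_inv_rev, mulVec_mulVec, Matrix.mul_assoc, Matrix.nonsing_inv_mul _ hBt,
    Matrix.mul_one, mulVec_transpose, ← dotProduct_mulVec, mulVec_mulVec,
    Matrix.mul_nonsing_inv _ hB, one_mulVec]

open scoped MatrixOrder in
lemma exists_eq_transpose_mul_self_of_posDef [DecidableEq k] {C : Matrix k k ℝ} (hC : C.PosDef) :
    ∃ B : Matrix k k ℝ, C = Bᵀ * B ∧ B.det ≠ 0 := by
  obtain ⟨B, hB, rfl⟩ := CStarAlgebra.isStrictlyPositive_iff_eq_star_mul_self.1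
    (isStrictlyPositive_iff_posDef.2 hC)
  exact ⟨B, by rw [star_eq_conjTranspose, conjTranspose_eq_transpose_of_trivial],
    ((isUnit_iff_isUnit_det B).1 hB).ne_zero⟩

lemma abs_det_inv_eq_rpow [DecidableEq k] (B : Matrix k k ℝ) :
    |B.det|⁻¹ = (Bᵀ * B).det ^ (-(1 : ℝ) / 2) := by
  rw [det_mul, det_transpose, ← abs_mul_abs_self, ← sq, ← Real.rpow_natCast,
    ← Real.rpow_mul (abs_nonneg _), ← Real.rpow_neg_one]
  norm_num

lemma fourierInv_gaussian_toEuclideanLin [DecidableEq k] {B : Matrix k k ℝ} (hB : B.det ≠ 0)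
    (v : k → ℝ) :
    𝓕⁻ (fun t => Complex.exp (-(2 * Real.pi ^ 2) * ‖B.toEuclideanLin t‖ ^ 2)) (WithLp.toLp 2 v) =
      ((2 * Real.pi) ^ (-(Fintype.card k : ℝ) / 2) * (Bᵀ * B).det ^ (-(1 : ℝ) / 2) *
        Real.exp (-(v ⬝ᵥ (Bᵀ * B)⁻¹ *ᵥ v) / 2) : ℝ) := by
  have hBt : IsUnit Bᵀ.det := by simpa using hB
  obtain ⟨w, rfl⟩ : ∃ w, Bᵀ *ᵥ w = v := ⟨Bᵀ⁻¹ *ᵥ v, by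
    rw [mulVec_mulVec, Matrix.mul_nonsing_inv _ hBt, one_mulVec]⟩
  have hadj : WithLp.toLp 2 (Bᵀ *ᵥ w) = B.toEuclideanLin.adjoint (WithLp.toLp 2 w) := by
    rw [← Matrix.toEuclideanLin_conjTranspose_eq_adjoint, conjTranspose_eq_transpose_of_trivial,
      Matrix.toLpLin_toLp, Matrix.toLin'_apply]
  rw [hadj, fourierInv_gaussian_comp_linearMap (by rwa [det_toEuclideanLin]), det_toEuclideanLin,
    dotProduct_inv_mulVec_transpose_mulVec hB.isUnit, abs_det_inv_eq_rpow, finrank_euclideanSpace,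
    EuclideanSpace.real_norm_sq_eq]
  simp [dotProduct, sq]

end Matrix

section EuclideanSpace

variable {ι : Type*} [Fintype ι] {f : (ι → ℝ) → ℝ}

lemma integral_comp_ofLp {E : Type*} [NormedAddCommGroup E] [NormedSpace ℝ E] (g : (ι → ℝ) → E) :
    ∫ x : EuclideanSpace ℝ ι, g x.ofLp = ∫ x, g x :=
  (PiLp.volume_preserving_ofLp ι).integral_comp
    (MeasurableEquiv.toLp 2 (ι → ℝ)).symm.measurableEmbedding g

lemma integrable_comp_ofLp {E : Type*} [NormedAddCommGroup E] {g : (ι → ℝ) → E}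
    (hg : Integrable g) : Integrable fun x : EuclideanSpace ℝ ι => g x.ofLp :=
  ((PiLp.volume_preserving_ofLp ι).integrable_comp_emb
    (MeasurableEquiv.toLp 2 (ι → ℝ)).symm.measurableEmbedding).2 hg

lemma integrable_mul_norm_sq (hmom : ∀ j l, Integrable fun x => x j * x l * f x) :
    Integrable fun x : EuclideanSpace ℝ ι => f x.ofLp * ‖x‖ ^ 2 := by
  simp only [EuclideanSpace.real_norm_sq_eq, mul_comm (f _), Finset.sum_mul]
  simp only [sq]
  exact integrable_finsetSum _ fun j _ => integrable_comp_ofLp (hmom j j)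

lemma integral_mul_inner_sq_eq {C : Matrix ι ι ℝ}
    (hmom : ∀ j l, Integrable fun x => x j * x l * f x)
    (hC : ∀ j l, C j l = ∫ x, x j * x l * f x) (t : EuclideanSpace ℝ ι) :
    ∫ x : EuclideanSpace ℝ ι, f x.ofLp * inner ℝ x t ^ 2 = t.ofLp ⬝ᵥ C *ᵥ t.ofLp := by
  have hint (j l : ι) : Integrable fun x : EuclideanSpace ℝ ι =>
      t j * t l * (x j * x l * f x.ofLp) := (integrable_comp_ofLp (hmom j l)).const_mul _
  calc ∫ x : EuclideanSpace ℝ ι, f x.ofLp * inner ℝ x t ^ 2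
    _ = ∫ x : EuclideanSpace ℝ ι, ∑ j, ∑ l, t j * t l * (x j * x l * f x.ofLp) := by
      simp only [inner_sq_eq_sum, mul_comm (f _), Finset.sum_mul, mul_assoc]
    _ = ∑ j, ∑ l, t j * t l * C j l := by
      rw [integral_finsetSum _ fun j _ => integrable_finsetSum _ fun l _ => hint j l]
      simp only [integral_finsetSum _ fun l _ => hint _ l, integral_const_mul, hC,
        ← integral_comp_ofLp fun x : ι → ℝ => x _ * x _ * f x]
    _ = t.ofLp ⬝ᵥ C *ᵥ t.ofLp := by
      simp only [dotProduct, mulVec, Finset.mul_sum, mul_assoc, mul_comm (t.ofLp _) (C _ _)]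

lemma integral_mul_inner_eq_zero (hf : Integrable f) (h0 : ∀ x, 0 ≤ f x)
    (hcent : ∀ j, ∫ x, x j * f x = 0) (hmom : ∀ j l, Integrable fun x => x j * x l * f x)
    (t : EuclideanSpace ℝ ι) : ∫ x : EuclideanSpace ℝ ι, f x.ofLp * inner ℝ x t = 0 := by
  have hint (j : ι) : Integrable fun x : EuclideanSpace ℝ ι => f x.ofLp * x j := by
    simpa [PiLp.inner_apply] using integrable_mul_inner (integrable_comp_ofLp hf)
      (fun x => h0 x.ofLp) (integrable_mul_norm_sq hmom) (EuclideanSpace.single j 1)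
  have hcoord (j : ι) : ∫ x : EuclideanSpace ℝ ι, f x.ofLp * x j = 0 := by
    simpa only [mul_comm] using (integral_comp_ofLp fun x => x j * f x).trans (hcent j)
  calc ∫ x : EuclideanSpace ℝ ι, f x.ofLp * inner ℝ x t
    _ = ∫ x : EuclideanSpace ℝ ι, ∑ j, t j * (f x.ofLp * x j) := by
      simp [PiLp.inner_apply, Finset.mul_sum, mul_left_comm]
    _ = 0 := by
      rw [integral_finsetSum _ fun j _ => (hint j).const_mul _]
      simp only [integral_const_mul, hcoord, mul_zero, Finset.sum_const_zero]

end EuclideanSpace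

section ConvPow

variable {k : ℕ} {f : (Fin k → ℝ) → ℝ}

lemma ofReal_convPow_add_two (f : (Fin k → ℝ) → ℝ) (n : ℕ) :
    (fun x : EuclideanSpace ℝ (Fin k) => (convPow k f (n + 2) x.ofLp : ℂ)) =
      (fun x => (f x.ofLp : ℂ)) ⋆[ContinuousLinearMap.mul ℂ ℂ]
        fun x => (convPow k f (n + 1) x.ofLp : ℂ) := by
  ext x
  simp only [convPow, convK, convolution, ContinuousLinearMap.mul_apply', ← integral_complex_ofReal,
    ← integral_comp_ofLp, WithLp.ofLp_sub, Complex.ofReal_mul, mul_comm]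

lemma integrable_ofReal_convPow (hf : Integrable f) (n : ℕ) :
    Integrable fun x : EuclideanSpace ℝ (Fin k) => (convPow k f (n + 1) x.ofLp : ℂ) := by
  induction n with
  | zero => exact (integrable_comp_ofLp hf).ofReal
  | succ n ih =>
    rw [ofReal_convPow_add_two]
    exact (integrable_comp_ofLp hf).ofReal.integrable_convolution _ ih

lemma fourier_ofReal_convPow (hf : Integrable f) (n : ℕ) :
    𝓕 (fun x : EuclideanSpace ℝ (Fin k) => (convPow k f (n + 1) x.ofLp : ℂ)) =
      𝓕 (fun x : EuclideanSpace ℝ (Fin k) => (f x.ofLp : ℂ)) ^ (n + 1) := by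
  induction n with
  | zero => rw [zero_add, pow_one]; rfl
  | succ n ih =>
    ext t
    rw [ofReal_convPow_add_two, pow_succ' _ (n + 1), Pi.mul_apply, ← ih]
    exact Real.fourier_mul_convolution_eq (integrable_comp_ofLp hf).ofReal
      (integrable_ofReal_convPow hf n) t

lemma eventually_ofReal_convPow_eq_fourierInv (hf : Integrable f)
    (hpow : ∀ᶠ n : ℕ in atTop,
      Integrable (𝓕 (fun x : EuclideanSpace ℝ (Fin k) => (f x.ofLp : ℂ)) ^ n)) :
    ∀ᶠ n : ℕ in atTop,
      (fun x : EuclideanSpace ℝ (Fin k) => (convPow k f n x.ofLp : ℂ)) =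
        𝓕⁻ (𝓕 (fun x : EuclideanSpace ℝ (Fin k) => (f x.ofLp : ℂ)) ^ n) := by
  rw [← map_add_atTop_eq_nat 2, eventually_map]
  filter_upwards [(tendsto_add_atTop_nat 1).eventually hpow] with n hn
  rw [← fourier_ofReal_convPow hf] at hn
  rw [ofReal_convPow_add_two, pow_succ' _ (n + 1), ← fourier_ofReal_convPow hf]
  exact convolution_eq_fourierInv (integrable_ofReal_convPow hf n)
    (integrable_comp_ofLp hf).ofReal hn

end ConvPow

section LocalLimitTheorem

variable {k : ℕ} {r : ℝ} {f : (Fin k → ℝ) → ℝ}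

lemma tendstoUniformly_ofReal_convPow (hr : 1 < r) (hf : Integrable f) (h0 : ∀ x, 0 ≤ f x)
    (h1 : ∫ x, f x = 1) (hfr : Integrable fun x => |f x| ^ r) (hcent : ∀ j, ∫ x, x j * f x = 0)
    (hmom : ∀ j l, Integrable fun x => x j * x l * f x) {B : Matrix (Fin k) (Fin k) ℝ}
    (hB : B.det ≠ 0) (hcov : ∀ j l, (Bᵀ * B) j l = ∫ x, x j * x l * f x) :
    TendstoUniformly
      (fun (n : ℕ) (w : EuclideanSpace ℝ (Fin k)) => √n ^ k • (convPow k f n (√n • w.ofLp) : ℂ))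
      (𝓕⁻ fun t => Complex.exp (-(2 * Real.pi ^ 2) * ‖B.toEuclideanLin t‖ ^ 2)) atTop := by
  have hF := integrable_comp_ofLp hf
  have hFr := integrable_comp_ofLp hfr
  have hF1 := (integral_comp_ofLp f).trans h1
  refine (tendstoUniformly_congr ?_).1 (tendstoUniformly_fourierInv_fourier_pow
    (L := B.toEuclideanLin) hr hF (fun x => h0 x.ofLp) hF1 hFr (integrable_mul_norm_sq hmom)
    (integral_mul_inner_eq_zero hf h0 hcent hmom) (by rwa [det_toEuclideanLin])
    fun t => by rw [integral_mul_inner_sq_eq hmom hcov, norm_sq_toEuclideanLin_apply])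
  filter_upwards [eventually_ofReal_convPow_eq_fourierInv hf
    (eventually_integrable_fourier_pow hr hF (fun x => h0 x.ofLp) hF1 hFr)] with n hn
  ext w
  simp only [finrank_euclideanSpace_fin, ← hn, WithLp.ofLp_smul]

end LocalLimitTheorem

theorem multivariate_local_clt_general
    (k : ℕ) (r : ℝ) (hr1 : 1 < r)
    (f : (Fin k → ℝ) → ℝ)
    (hfnn : ∀ x, 0 ≤ f x) (hfprob : ∫ x, f x = 1)
    (hLr : Integrable fun x => |f x| ^ r)
    (hcent : ∀ j, ∫ x, x j * f x = 0)
    (hmom2 : ∀ j l, Integrable fun x => x j * x l * f x)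
    (C : Matrix (Fin k) (Fin k) ℝ)
    (hC : ∀ j l, C j l = ∫ x, x j * x l * f x)
    (hCpos : C.PosDef) :
    TendstoUniformly
      (fun (n : ℕ) (v : Fin k → ℝ) =>
        (n : ℝ) ^ ((k : ℝ) / 2) * convPow k f n (Real.sqrt n • v))
      (fun v => (2 * Real.pi) ^ (-(k : ℝ) / 2) * C.det ^ (-(1 : ℝ) / 2) *
        Real.exp (-(v ⬝ᵥ C⁻¹.mulVec v) / 2))
      atTop := by
  have hf : Integrable f := .of_integral_ne_zero (by rw [hfprob]; exact one_ne_zero)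
  obtain ⟨B, rfl, hB⟩ := exists_eq_transpose_mul_self_of_posDef hCpos
  have hlim := Complex.reCLM.uniformContinuous.comp_tendstoUniformly
    ((tendstoUniformly_ofReal_convPow hr1 hf hfnn hfprob hLr hcent hmom2 hB hC).comp
      (WithLp.toLp 2))
  convert hlim using 2
  · ext v
    simp [Real.rpow_div_two_eq_sqrt, -Complex.ofReal_pow]
  · simp only [Function.comp_apply, fourierInv_gaussian_toEuclideanLin hB, Fintype.card_fin,
      Complex.reCLM_apply, Complex.ofReal_re]

/-- Multivariate local central limit theorem: if `f` is the common
density of i.i.d. centered random vectors in `ℝ^k` with `f ∈ L^r` for some `r ∈ (1,2]`,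
finite second moments and positive definite covariance matrix `C` (so
`C j l = ∫ v_j v_l f(v) dv`), then `n^{k/2} f^{(n)}(√n · v)` converges uniformly on `ℝ^k` to
the Gaussian density `(2π)^{−k/2} (det C)^{−1/2} exp(−⟨v, C⁻¹ v⟩/2)`, where `f^{(n)}` is the
`n`-fold convolution of `f`. -/
theorem multivariate_local_clt
    (k : ℕ) (r : ℝ) (hr1 : 1 < r) (hr2 : r ≤ 2)
    (f : (Fin k → ℝ) → ℝ)
    (hfmeas : Measurable f) (hfnn : ∀ x, 0 ≤ f x) (hfprob : ∫ x, f x = 1)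
    (hLr : Integrable fun x => |f x| ^ r)
    (hmom1int : ∀ j, Integrable fun x => x j * f x)
    (hcent : ∀ j, ∫ x, x j * f x = 0)
    (hmom2 : ∀ j l, Integrable fun x => x j * x l * f x)
    (C : Matrix (Fin k) (Fin k) ℝ)
    (hC : ∀ j l, C j l = ∫ x, x j * x l * f x)
    (hCpos : C.PosDef) :
    TendstoUniformly
      (fun (n : ℕ) (v : Fin k → ℝ) =>
        (n : ℝ) ^ ((k : ℝ) / 2) * convPow k f n (Real.sqrt n • v))
      (fun v => (2 * Real.pi) ^ (-(k : ℝ) / 2) * C.det ^ (-(1 : ℝ) / 2) *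
        Real.exp (-(v ⬝ᵥ C⁻¹.mulVec v) / 2))
      atTop :=
  multivariate_local_clt_general k r hr1 f hfnn hfprob hLr hcent hmom2 C hC hCpos

end
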